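/- arXiv:1412.7840 — 2 statements merged into one kernel-verified Lean document; each statement's English description precedes it below -/
import Mathlib

section
/- Suppose the pair (A,B) is controllable (the controllability matrix [B, AB, …, A^{n-1}B] has rank n) and A is nonsingular. Then the value function V of the maximum hands-off control problem is strictly convex on the reachable set R: for all distinct ξ, η ∈ R and all λ ∈ (0,1), V((1-λ)ξ + λη) < (1-λ)V(ξ) + λV(η). -/
open MeasureTheory Set

noncomputable section

/-- Controllability matrix `[B, AB, ..., A^{n-1}B]`. -/
def ctrbMatrix (n : ℕ) (A : Matrix (Fin n) (Fin n) ℝ) (B : Fin n → ℝ) :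
    Matrix (Fin n) (Fin n) ℝ :=
  Matrix.of fun i j => (A ^ (j : ℕ)).mulVec B i

/-- `∫₀ᵀ e^{-As} B u(s) ds`. -/
def stateInt (n : ℕ) (T : ℝ) (A : Matrix (Fin n) (Fin n) ℝ) (B : Fin n → ℝ)
    (u : ℝ → ℝ) : Fin n → ℝ :=
  ∫ s in Icc (0:ℝ) T, u s • (NormedSpace.exp ((-s) • A)).mulVec B

/-- The magnitude constraint `‖u‖_∞ ≤ 1` on `[0,T]`. -/
def MagBdd (T : ℝ) (u : ℝ → ℝ) : Prop := ∀ t ∈ Icc (0:ℝ) T, |u t| ≤ 1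

/-- The `L¹` norm of `u` on `[0,T]`. -/
def L1Norm (T : ℝ) (u : ℝ → ℝ) : ℝ := ∫ t in Icc (0:ℝ) T, |u t|

/-- The `L⁰` norm of `u`: Lebesgue measure of `{t ∈ [0,T] : u t ≠ 0}`. -/
def L0Norm (T : ℝ) (u : ℝ → ℝ) : ℝ := (volume {t ∈ Icc (0:ℝ) T | u t ≠ 0}).toReal

/-- Admissible controls steering `ξ` to `0` at time `T`:
`∫₀ᵀ e^{-As} B u(s) ds = -ξ` and `‖u‖_∞ ≤ 1`. -/
def Admissible (n : ℕ) (T : ℝ) (A : Matrix (Fin n) (Fin n) ℝ) (B : Fin n → ℝ)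
    (ξ : Fin n → ℝ) (u : ℝ → ℝ) : Prop :=
  Measurable u ∧ MagBdd T u ∧ stateInt n T A B u = -ξ

/-- Value function of the maximum hands-off (`L⁰`-optimal) control problem. -/
def V0 (n : ℕ) (T : ℝ) (A : Matrix (Fin n) (Fin n) ℝ) (B : Fin n → ℝ)
    (ξ : Fin n → ℝ) : ℝ :=
  sInf {c | ∃ u, Admissible n T A B ξ u ∧ c = L0Norm T u}

/-- Value function of the `L¹`-optimal control problem. -/
def V1 (n : ℕ) (T : ℝ) (A : Matrix (Fin n) (Fin n) ℝ) (B : Fin n → ℝ)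
    (ξ : Fin n → ℝ) : ℝ :=
  sInf {c | ∃ u, Admissible n T A B ξ u ∧ c = L1Norm T u}

/-- The reachable set `R`. -/
def Reach (n : ℕ) (T : ℝ) (A : Matrix (Fin n) (Fin n) ℝ) (B : Fin n → ℝ) :
    Set (Fin n → ℝ) :=
  {x | ∃ u, Measurable u ∧ MagBdd T u ∧ x = stateInt n T A B u}

/-- The set `R_α`. -/
def ReachL1 (n : ℕ) (T : ℝ) (A : Matrix (Fin n) (Fin n) ℝ) (B : Fin n → ℝ)
    (α : ℝ) : Set (Fin n → ℝ) :=
  {x | ∃ u, Measurable u ∧ MagBdd T u ∧ L1Norm T u ≤ α ∧ x = stateInt n T A B u}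

def phi (n : ℕ) (A : Matrix (Fin n) (Fin n) ℝ) (B : Fin n → ℝ) (s : ℝ) : Fin n → ℝ :=
  (NormedSpace.exp ((-s) • A)).mulVec B

section expo
open scoped Matrix.Norms.Operator

/-- Pairing of the exponential curve with a linear functional and a vector, as a linear map. -/
def pairing (n : ℕ) (a : (Fin n → ℝ) →ₗ[ℝ] ℝ) (C : Fin n → ℝ) :
    Matrix (Fin n) (Fin n) ℝ →L[ℝ] ℝ :=
  LinearMap.toContinuousLinearMap
    { toFun := fun M => a (M.mulVec C)
      map_add' := fun M N => by simp [Matrix.add_mulVec]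
      map_smul' := fun c M => by simp [Matrix.smul_mulVec] }

lemma pairing_apply (n : ℕ) (a : (Fin n → ℝ) →ₗ[ℝ] ℝ) (C : Fin n → ℝ)
    (M : Matrix (Fin n) (Fin n) ℝ) : pairing n a C M = a (M.mulVec C) := rfl

lemma phi_deriv (n : ℕ) (A : Matrix (Fin n) (Fin n) ℝ) (a : (Fin n → ℝ) →ₗ[ℝ] ℝ)
    (C : Fin n → ℝ) (s : ℝ) :
    HasDerivAt (fun s => a (phi n A C s)) (-(a (phi n A (A.mulVec C) s))) s := by
  have h1 := hasDerivAt_exp_smul_const (𝕂 := ℝ) A (-s)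
  have h2 := h1.scomp s (hasDerivAt_neg s)
  have h3 := (pairing n a C).hasFDerivAt.comp_hasDerivAt s h2
  have e : pairing n a C ((-1 : ℝ) • (NormedSpace.exp ((-s) • A) * A))
      = -(a (phi n A (A.mulVec C) s)) := by
    rw [pairing_apply, Matrix.smul_mulVec, map_smul, phi, Matrix.mulVec_mulVec]
    simp
  exact h3.congr_deriv e

lemma phi_analytic (n : ℕ) (A : Matrix (Fin n) (Fin n) ℝ) (a : (Fin n → ℝ) →ₗ[ℝ] ℝ)
    (C : Fin n → ℝ) : AnalyticOnNhd ℝ (fun s => a (phi n A C s)) Set.univ := by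
  intro s _
  have h1 : AnalyticAt ℝ (fun s : ℝ => (-s) • A) s := by fun_prop
  have h2 : AnalyticAt ℝ (NormedSpace.exp : Matrix (Fin n) (Fin n) ℝ → _) ((-s) • A) :=
    NormedSpace.exp_analytic _
  have h3 : AnalyticAt ℝ (fun s : ℝ => NormedSpace.exp ((-s) • A)) s :=
    AnalyticAt.comp_of_eq h2 h1 rfl
  exact ((pairing n a C).analyticAt _).fun_comp h3

lemma phi_continuous (n : ℕ) (A : Matrix (Fin n) (Fin n) ℝ) (C : Fin n → ℝ) :
    Continuous (phi n A C) := by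
  refine continuous_pi fun i => ?_
  have := (phi_analytic n A (LinearMap.proj i) C).continuousOn
  simpa [continuousOn_univ] using this
end expo

lemma phi_zero (n : ℕ) (A : Matrix (Fin n) (Fin n) ℝ) (C : Fin n → ℝ) : phi n A C 0 = C := by
  simp [phi]

lemma phi_iter (n : ℕ) (A : Matrix (Fin n) (Fin n) ℝ) (a : (Fin n → ℝ) →ₗ[ℝ] ℝ)
    (B : Fin n → ℝ) (c : ℝ) (h : ∀ s, a (phi n A B s) = c) (k : ℕ) :
    ∀ s, a (phi n A ((A ^ (k+1)).mulVec B) s) = 0 := by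
  induction k with
  | zero =>
    intro s
    have h1 := phi_deriv n A a B s
    have h2 : (fun s => a (phi n A B s)) = fun _ => c := funext h
    rw [h2] at h1
    have := h1.unique (hasDerivAt_const s c)
    simpa using this
  | succ k ih =>
    intro s
    have h1 := phi_deriv n A a ((A ^ (k+1)).mulVec B) s
    have h2 : (fun s => a (phi n A ((A ^ (k+1)).mulVec B) s)) = fun _ => 0 := funext ih
    rw [h2] at h1
    have := h1.unique (hasDerivAt_const s 0)
    rw [pow_succ' A (k+1), ← Matrix.mulVec_mulVec]
    simpa using this

lemma functional_zero (n : ℕ) (A : Matrix (Fin n) (Fin n) ℝ) (B : Fin n → ℝ)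
    (hctrb : (ctrbMatrix n A B).rank = n) (hA : A.det ≠ 0) (a : (Fin n → ℝ) →ₗ[ℝ] ℝ)
    (h : ∀ k : ℕ, a ((A ^ (k+1)).mulVec B) = 0) : a = 0 := by
  have hU : IsUnit (ctrbMatrix n A B) := by
    rw [← Matrix.mulVec_surjective_iff_isUnit]
    have : LinearMap.range (ctrbMatrix n A B).mulVecLin = ⊤ := by
      apply Submodule.eq_top_of_finrank_eq
      rw [Module.finrank_fin_fun]
      exact hctrb
    exact LinearMap.range_eq_top.1 this
  have hAU : IsUnit A := by rw [Matrix.isUnit_iff_isUnit_det]; exact hA.isUnit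
  have hs : Function.Surjective (A * ctrbMatrix n A B).mulVec :=
    Matrix.mulVec_surjective_iff_isUnit.2 (hAU.mul hU)
  refine LinearMap.ext fun w => ?_
  obtain ⟨v, hv⟩ := hs w
  rw [← hv, Matrix.mulVec_eq_sum, map_sum]
  refine Finset.sum_eq_zero fun j _ => ?_
  have : (A * ctrbMatrix n A B).col j = (A ^ ((j:ℕ)+1)).mulVec B := by
    rw [pow_succ', ← Matrix.mulVec_mulVec]
    ext i
    simp [Matrix.mul_apply, ctrbMatrix, Matrix.mulVec, dotProduct]
  have e : (A * ctrbMatrix n A B).transpose j = (A ^ ((j:ℕ)+1)).mulVec B := this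
  simp [e, h]

lemma level_null (n : ℕ) (A : Matrix (Fin n) (Fin n) ℝ) (B : Fin n → ℝ)
    (hctrb : (ctrbMatrix n A B).rank = n) (hA : A.det ≠ 0) (a : (Fin n → ℝ) →ₗ[ℝ] ℝ)
    (ha : a ≠ 0) (c : ℝ) : ∀ᵐ s : ℝ, a (phi n A B s) ≠ c := by
  have hx : ∃ x, a (phi n A B x) - c ≠ 0 := by
    by_contra! hcon
    apply ha
    apply functional_zero n A B hctrb hA
    intro k
    have := phi_iter n A a B c (fun s => sub_eq_zero.1 (hcon s)) k 0
    rwa [phi_zero] at this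
  obtain ⟨x, hx⟩ := hx
  have hf : AnalyticOnNhd ℝ (fun s => a (phi n A B s) - c) Set.univ :=
    (phi_analytic n A a B).sub analyticOnNhd_const
  have h := hf.preimage_zero_mem_codiscrete hx
  have h2 := ae_restrict_le_codiscreteWithin (μ := volume) MeasurableSet.univ h
  rw [Measure.restrict_univ] at h2
  filter_upwards [h2] with s hs h0
  exact hs (by simp [h0])

/-- The pointwise minimizer of `|u| + u q` over `|u| ≤ 1`. -/
def ustar (q : ℝ → ℝ) (s : ℝ) : ℝ := if 1 < q s then -1 else if q s < -1 then 1 else 0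

/-- Lagrangian `∫ |u| + u q`. -/
def Jfun (T : ℝ) (q u : ℝ → ℝ) : ℝ := ∫ s in Icc (0:ℝ) T, (|u s| + u s * q s)

lemma ustar_measurable (q : ℝ → ℝ) (hq : Continuous q) : Measurable (ustar q) := by
  unfold ustar
  refine Measurable.ite (measurableSet_lt measurable_const hq.measurable) measurable_const ?_
  exact Measurable.ite (measurableSet_lt hq.measurable measurable_const) measurable_const
    measurable_const

lemma ustar_bdd (T : ℝ) (q : ℝ → ℝ) : MagBdd T (ustar q) := by
  intro s _
  unfold ustar
  split_ifs <;> simp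

lemma pointwise_gap (q u : ℝ) (v : ℝ) (hu : |u| ≤ 1)
    (hv : v = if 1 < q then -1 else if q < -1 then 1 else 0) :
    |(|q| - 1)| * |u - v| ≤ (|u| + u * q) - (|v| + v * q) := by
  obtain ⟨h1, h2⟩ := abs_le.1 hu
  split_ifs at hv with h h'
  · subst hv
    rw [abs_of_pos (by linarith : 0 < q), abs_of_pos (by linarith : 0 < q - 1),
      abs_of_nonneg (by linarith : 0 ≤ u - -1)]
    have := neg_abs_le u
    norm_num
    nlinarith
  · subst hv
    rw [abs_of_neg (by linarith : q < 0), abs_of_pos (by linarith : 0 < -q - 1),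
      abs_of_nonpos (by linarith : u - 1 ≤ 0)]
    have := le_abs_self u
    norm_num
    nlinarith
  · subst hv
    have hq : |q| ≤ 1 := abs_le.2 ⟨by linarith, by linarith⟩
    rw [abs_of_nonpos (by linarith : |q| - 1 ≤ 0)]
    have : -(|u| * |q|) ≤ u * q := by rw [← abs_mul]; exact neg_abs_le _
    simp
    nlinarith

lemma ae_bdd {T : ℝ} {u : ℝ → ℝ} (hb : MagBdd T u) :
    ∀ᵐ s ∂(volume.restrict (Icc (0:ℝ) T)), |u s| ≤ 1 := by
  filter_upwards [ae_restrict_mem measurableSet_Icc] with s hs using hb s hs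

lemma integrable_u {T : ℝ} {u : ℝ → ℝ} (hm : Measurable u) (hb : MagBdd T u) :
    Integrable u (volume.restrict (Icc (0:ℝ) T)) := by
  refine Integrable.of_bound hm.aestronglyMeasurable 1 ?_
  simpa using ae_bdd hb

lemma integrable_smul {T : ℝ} {E : Type*} [NormedAddCommGroup E] [NormedSpace ℝ E]
    {u : ℝ → ℝ} (hm : Measurable u) (hb : MagBdd T u) {f : ℝ → E}
    (hf : Continuous f) : Integrable (fun s => u s • f s) (volume.restrict (Icc (0:ℝ) T)) := by
  have h1 : Integrable f (volume.restrict (Icc (0:ℝ) T)) :=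
    hf.continuousOn.integrableOn_Icc
  refine h1.bdd_smul 1 hm.aestronglyMeasurable ?_
  simpa using ae_bdd hb

lemma Jfun_eq {T : ℝ} {u : ℝ → ℝ} (hm : Measurable u) (hb : MagBdd T u) {q : ℝ → ℝ}
    (hq : Continuous q) : Jfun T q u = L1Norm T u + ∫ s in Icc (0:ℝ) T, u s * q s :=
  integral_add (integrable_u hm hb).abs (integrable_smul hm hb hq)

lemma integrable_J {T : ℝ} {u : ℝ → ℝ} (hm : Measurable u) (hb : MagBdd T u) {q : ℝ → ℝ}
    (hq : Continuous q) :
    Integrable (fun s => |u s| + u s * q s) (volume.restrict (Icc (0:ℝ) T)) :=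
  (integrable_u hm hb).abs.add (integrable_smul hm hb hq)

lemma Jfun_ge {T : ℝ} {u : ℝ → ℝ} (hm : Measurable u) (hb : MagBdd T u) {q : ℝ → ℝ}
    (hq : Continuous q) : Jfun T q (ustar q) ≤ Jfun T q u := by
  refine integral_mono_ae (integrable_J (ustar_measurable q hq) (ustar_bdd T q) hq)
    (integrable_J hm hb hq) ?_
  filter_upwards [ae_bdd hb] with s hs
  have := pointwise_gap (q s) (u s) (ustar q s) hs rfl
  have h0 : 0 ≤ |(|q s| - 1)| * |u s - ustar q s| := by positivity
  linarith

lemma subseq {T : ℝ} {u : ℕ → ℝ → ℝ} (hm : ∀ k, Measurable (u k)) (hb : ∀ k, MagBdd T (u k))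
    {q : ℝ → ℝ} (hq : Continuous q) (hq1 : ∀ᵐ s : ℝ, q s ≠ 1) (hq2 : ∀ᵐ s : ℝ, q s ≠ -1)
    (hJ : Filter.Tendsto (fun k => Jfun T q (u k)) Filter.atTop (nhds (Jfun T q (ustar q)))) :
    ∃ ns : ℕ → ℕ, StrictMono ns ∧ ∀ᵐ s ∂(volume.restrict (Icc (0:ℝ) T)),
      Filter.Tendsto (fun k => u (ns k) s) Filter.atTop (nhds (ustar q s)) := by
  set μ := volume.restrict (Icc (0:ℝ) T) with hμ
  have hsm := ustar_measurable q hq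
  have hsb := ustar_bdd T q
  set g : ℕ → ℝ → ℝ := fun k s => |(|q s| - 1)| * |u k s - ustar q s| with hg
  have hgm : ∀ k, Measurable (g k) := fun k => by
    have := hm k
    have := hq.measurable
    fun_prop
  have hgap : ∀ k, ∀ᵐ s ∂μ, g k s ≤ (|u k s| + u k s * q s) - (|ustar q s| + ustar q s * q s) := by
    intro k
    filter_upwards [ae_bdd (hb k)] with s hs
    exact pointwise_gap (q s) (u k s) (ustar q s) hs rfl
  have hI : ∀ k, Integrable (fun s => (|u k s| + u k s * q s) - (|ustar q s| + ustar q s * q s)) μ :=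
    fun k => (integrable_J (hm k) (hb k) hq).sub (integrable_J hsm hsb hq)
  have hgI : ∀ k, Integrable (g k) μ := by
    intro k
    refine (hI k).mono' (hgm k).aestronglyMeasurable ?_
    filter_upwards [hgap k] with s hs
    rw [Real.norm_of_nonneg (by positivity)]
    exact hs
  have hlim : Filter.Tendsto (fun k => ∫ s, g k s ∂μ) Filter.atTop (nhds 0) := by
    have h1 : Filter.Tendsto (fun k => Jfun T q (u k) - Jfun T q (ustar q)) Filter.atTop
        (nhds 0) := by simpa using hJ.sub_const (Jfun T q (ustar q))
    refine squeeze_zero (fun k => integral_nonneg fun s => by positivity) (fun k => ?_) h1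
    unfold Jfun
    rw [← integral_sub (integrable_J (hm k) (hb k) hq) (integrable_J hsm hsb hq)]
    exact integral_mono_ae (hgI k) (hI k) (hgap k)
  have hmeas : TendstoInMeasure μ g Filter.atTop (fun _ => 0) := by
    refine tendstoInMeasure_of_tendsto_eLpNorm (p := 1) one_ne_zero
      (fun k => (hgm k).aestronglyMeasurable) aestronglyMeasurable_const ?_
    have : ∀ k, eLpNorm (g k - fun _ => 0) 1 μ = ENNReal.ofReal (∫ s, g k s ∂μ) := by
      intro k
      have e : (g k - fun _ => (0:ℝ)) = g k := by ext; simp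
      rw [e, eLpNorm_one_eq_lintegral_enorm, ← ofReal_integral_norm_eq_lintegral_enorm (hgI k)]
      congr 1
      refine integral_congr_ae (Filter.Eventually.of_forall fun s => ?_)
      exact Real.norm_of_nonneg (by positivity)
    simp_rw [this]
    simpa using ENNReal.tendsto_ofReal hlim
  obtain ⟨ns, hns, hae⟩ := hmeas.exists_seq_tendsto_ae
  refine ⟨ns, hns, ?_⟩
  filter_upwards [hae, ae_restrict_of_ae hq1, ae_restrict_of_ae hq2] with s hs h1 h2
  have hc : |(|q s| - 1)| ≠ 0 := by
    intro h
    have : |q s| = 1 := by linarith [abs_eq_zero.1 h]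
    rcases (abs_eq zero_le_one).1 this with h | h
    · exact h1 h
    · exact h2 h
  have h3 := hs.const_mul (|(|q s| - 1)|)⁻¹
  have h4 : ∀ k, (|(|q s| - 1)|)⁻¹ * g (ns k) s = |u (ns k) s - ustar q s| := fun k => by
    simp only [hg]; field_simp
  simp_rw [h4, mul_zero] at h3
  rw [tendsto_iff_norm_sub_tendsto_zero]
  exact h3

section ctrl
variable {n : ℕ} {T : ℝ} {A : Matrix (Fin n) (Fin n) ℝ} {B : Fin n → ℝ}

lemma a_stateInt (a : (Fin n → ℝ) →ₗ[ℝ] ℝ) {u : ℝ → ℝ} (hm : Measurable u) (hb : MagBdd T u) :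
    a (stateInt n T A B u) = ∫ s in Icc (0:ℝ) T, u s * a (phi n A B s) := by
  have h := (LinearMap.toContinuousLinearMap a).integral_comp_comm
    (integrable_smul hm hb (phi_continuous n A B))
  simp only [map_smul, smul_eq_mul] at h
  exact h.symm

lemma a_cont (a : (Fin n → ℝ) →ₗ[ℝ] ℝ) : Continuous (fun s => a (phi n A B s)) :=
  (LinearMap.continuous_of_finiteDimensional a).comp (phi_continuous n A B)

lemma Jfun_adm (a : (Fin n → ℝ) →ₗ[ℝ] ℝ) {ξ : Fin n → ℝ} {u : ℝ → ℝ}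
    (hu : Admissible n T A B ξ u) :
    Jfun T (fun s => a (phi n A B s)) u = L1Norm T u - a ξ := by
  obtain ⟨hm, hb, he⟩ := hu
  rw [Jfun_eq hm hb (a_cont a), ← a_stateInt a hm hb, he, map_neg]
  ring

lemma stateInt_tendsto {u : ℕ → ℝ → ℝ} {v : ℝ → ℝ} (hm : ∀ k, Measurable (u k))
    (hb : ∀ k, MagBdd T (u k))
    (h : ∀ᵐ s ∂(volume.restrict (Icc (0:ℝ) T)),
      Filter.Tendsto (fun k => u k s) Filter.atTop (nhds (v s))) :
    Filter.Tendsto (fun k => stateInt n T A B (u k)) Filter.atTop (nhds (stateInt n T A B v)) := by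
  have hp := phi_continuous n A B
  refine tendsto_integral_of_dominated_convergence (fun s => ‖phi n A B s‖)
    (fun k => (integrable_smul (hm k) (hb k) hp).aestronglyMeasurable)
    (hp.norm.continuousOn.integrableOn_Icc) (fun k => ?_) ?_
  · filter_upwards [ae_bdd (hb k)] with s hs
    rw [norm_smul]
    exact mul_le_of_le_one_left (norm_nonneg _) hs
  · filter_upwards [h] with s hs
    exact hs.smul_const _

lemma L1_nonneg (u : ℝ → ℝ) : 0 ≤ L1Norm T u := integral_nonneg fun _ => abs_nonneg _

lemma V1_le {ξ : Fin n → ℝ} {u : ℝ → ℝ} (hu : Admissible n T A B ξ u) :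
    V1 n T A B ξ ≤ L1Norm T u :=
  csInf_le ⟨0, by rintro c ⟨u, -, rfl⟩; exact L1_nonneg u⟩ ⟨u, hu, rfl⟩

lemma V0_le {ξ : Fin n → ℝ} {u : ℝ → ℝ} (hu : Admissible n T A B ξ u) :
    V0 n T A B ξ ≤ L0Norm T u :=
  csInf_le ⟨0, by rintro c ⟨u, -, rfl⟩; exact ENNReal.toReal_nonneg⟩ ⟨u, hu, rfl⟩

lemma V1_approx {ξ : Fin n → ℝ} (h : ∃ u, Admissible n T A B ξ u) {ε : ℝ} (hε : 0 < ε) :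
    ∃ u, Admissible n T A B ξ u ∧ L1Norm T u < V1 n T A B ξ + ε := by
  obtain ⟨u, hu⟩ := h
  obtain ⟨c, ⟨v, hv, rfl⟩, hc⟩ := exists_lt_of_csInf_lt
    (s := {c | ∃ u, Admissible n T A B ξ u ∧ c = L1Norm T u}) ⟨_, u, hu, rfl⟩
    (show V1 n T A B ξ < V1 n T A B ξ + ε by linarith)
  exact ⟨v, hv, hc⟩

lemma L0_eq {u : ℝ → ℝ} (hm : Measurable u) :
    L0Norm T u = ∫ s in Icc (0:ℝ) T, {t | u t ≠ 0}.indicator (fun _ => (1:ℝ)) s := by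
  have hS : MeasurableSet {t | u t ≠ 0} := hm (measurableSet_singleton 0).compl
  rw [integral_indicator_const _ hS, measureReal_restrict_apply hS]
  unfold L0Norm
  simp only [smul_eq_mul, mul_one, measureReal_def]
  congr 2
  ext t
  simp [and_comm]

lemma integrable_ind {u : ℝ → ℝ} (hm : Measurable u) :
    Integrable ({t | u t ≠ 0}.indicator (fun _ => (1:ℝ))) (volume.restrict (Icc (0:ℝ) T)) := by
  have hS : MeasurableSet {t | u t ≠ 0} := hm (measurableSet_singleton 0).compl
  exact (integrable_const _).indicator hS

lemma L1_le_L0 {u : ℝ → ℝ} (hm : Measurable u) (hb : MagBdd T u) :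
    L1Norm T u ≤ L0Norm T u := by
  rw [L0_eq hm]
  refine integral_mono_ae (integrable_u hm hb).abs (integrable_ind hm) ?_
  filter_upwards [ae_bdd hb] with s hs
  by_cases h : u s = 0
  · simp [h]
  · simp [h, hs]

lemma V1_le_V0 {ξ : Fin n → ℝ} (h : ∃ u, Admissible n T A B ξ u) :
    V1 n T A B ξ ≤ V0 n T A B ξ := by
  obtain ⟨u, hu⟩ := h
  refine le_csInf ⟨_, u, hu, rfl⟩ ?_
  rintro c ⟨v, hv, rfl⟩
  exact (V1_le hv).trans (L1_le_L0 hv.1 hv.2.1)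

lemma L0_ustar (q : ℝ → ℝ) (hq : Continuous q) : L0Norm T (ustar q) = L1Norm T (ustar q) := by
  rw [L0_eq (ustar_measurable q hq)]
  refine integral_congr_ae (Filter.Eventually.of_forall fun s => ?_)
  simp only [indicator, Set.mem_ofPred_eq, ustar]
  split_ifs <;> simp_all

/-- Uniqueness and existence in the normal case. -/
lemma normal_adm (a : (Fin n → ℝ) →ₗ[ℝ] ℝ)
    (hq1 : ∀ᵐ s : ℝ, a (phi n A B s) ≠ 1) (hq2 : ∀ᵐ s : ℝ, a (phi n A B s) ≠ -1)
    {ξ : Fin n → ℝ} (h : ∃ u, Admissible n T A B ξ u)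
    (hV : V1 n T A B ξ - a ξ ≤ Jfun T (fun s => a (phi n A B s))
      (ustar (fun s => a (phi n A B s)))) :
    Admissible n T A B ξ (ustar (fun s => a (phi n A B s))) := by
  set q : ℝ → ℝ := fun s => a (phi n A B s) with hqdef
  have hq : Continuous q := a_cont a
  have hex : ∀ k : ℕ, ∃ u, Admissible n T A B ξ u ∧
      L1Norm T u < V1 n T A B ξ + 1 / ((k:ℝ) + 1) := fun k => V1_approx h (by positivity)
  choose u hu hlt using hex
  have hm : ∀ k, Measurable (u k) := fun k => (hu k).1
  have hb : ∀ k, MagBdd T (u k) := fun k => (hu k).2.1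
  have hJ : Filter.Tendsto (fun k => Jfun T q (u k)) Filter.atTop (nhds (Jfun T q (ustar q))) := by
    have h1 : Filter.Tendsto (fun k : ℕ => Jfun T q (ustar q) + 1 / ((k:ℝ) + 1)) Filter.atTop
        (nhds (Jfun T q (ustar q))) := by
      simpa using tendsto_one_div_add_atTop_nhds_zero_nat.const_add (Jfun T q (ustar q))
    refine tendsto_of_tendsto_of_tendsto_of_le_of_le tendsto_const_nhds h1
      (fun k => Jfun_ge (hm k) (hb k) hq) (fun k => ?_)
    have := Jfun_adm a (hu k)
    have := hlt k
    simp only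
    linarith
  obtain ⟨ns, -, hae⟩ := subseq hm hb hq hq1 hq2 hJ
  have ht := stateInt_tendsto (n := n) (A := A) (B := B) (fun k => hm (ns k))
    (fun k => hb (ns k)) hae
  have hc : (fun k => stateInt n T A B (u (ns k))) = fun _ => -ξ := funext fun k => (hu _).2.2
  rw [hc] at ht
  exact ⟨ustar_measurable q hq, ustar_bdd T q, tendsto_nhds_unique ht tendsto_const_nhds |>.symm ▸ rfl⟩

lemma adm_comb {ξ η : Fin n → ℝ} {u v : ℝ → ℝ} (hu : Admissible n T A B ξ u)
    (hv : Admissible n T A B η v) {c d : ℝ} (hc : 0 ≤ c) (hd : 0 ≤ d) (hcd : c + d = 1) :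
    Admissible n T A B (c • ξ + d • η) (fun s => c * u s + d * v s) ∧
      L1Norm T (fun s => c * u s + d * v s) ≤ c * L1Norm T u + d * L1Norm T v := by
  obtain ⟨hum, hub, hue⟩ := hu
  obtain ⟨hvm, hvb, hve⟩ := hv
  have habs : ∀ s, |c * u s + d * v s| ≤ c * |u s| + d * |v s| := fun s => by
    refine (abs_add_le _ _).trans ?_
    rw [abs_mul, abs_mul, abs_of_nonneg hc, abs_of_nonneg hd]
  have hm : Measurable (fun s => c * u s + d * v s) := by fun_prop
  have hb : MagBdd T (fun s => c * u s + d * v s) := fun s hs => by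
    have := hub s hs
    have := hvb s hs
    have := habs s
    simp only
    nlinarith
  refine ⟨⟨hm, hb, ?_⟩, ?_⟩
  · have hp := phi_continuous n A B
    have e : stateInt n T A B (fun s => c * u s + d * v s)
        = c • stateInt n T A B u + d • stateInt n T A B v := by
      have h3 := integral_add ((integrable_smul hum hub hp).smul c)
        ((integrable_smul hvm hvb hp).smul d)
      simp only [Pi.smul_apply] at h3
      rw [integral_smul, integral_smul] at h3
      refine Eq.trans ?_ h3
      unfold stateInt
      congr 1
      ext1 s
      simp only [add_smul, mul_smul]
      rfl
    rw [e, hue, hve]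
    simp [add_comm]
  · unfold L1Norm
    rw [← integral_const_mul, ← integral_const_mul,
      ← integral_add ((integrable_u hum hub).abs.const_mul c) ((integrable_u hvm hvb).abs.const_mul d)]
    refine integral_mono (integrable_u hm hb).abs
      (((integrable_u hum hub).abs.const_mul c).add ((integrable_u hvm hvb).abs.const_mul d)) habs

lemma adm_of_reach {ξ : Fin n → ℝ} (h : ξ ∈ Reach n T A B) : ∃ u, Admissible n T A B ξ u := by
  obtain ⟨u, hm, hb, rfl⟩ := h
  refine ⟨fun s => -u s, hm.neg, fun s hs => by simpa using hb s hs, ?_⟩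
  unfold stateInt
  rw [← integral_neg]
  simp

/-- Supporting hyperplane to the epigraph of the `L¹` value function. -/
lemma support {ζ : Fin n → ℝ} (hζ : ∃ u, Admissible n T A B ζ u) :
    ∃ f : ((Fin n → ℝ) × ℝ) →ₗ[ℝ] ℝ, f ≠ 0 ∧ ∀ ξ u, Admissible n T A B ξ u →
      ∀ y, L1Norm T u ≤ y → f (ξ, y) ≤ f (ζ, V1 n T A B ζ) := by
  set K : Set ((Fin n → ℝ) × ℝ) := {z | ∃ u, Admissible n T A B z.1 u ∧ L1Norm T u ≤ z.2} with hK
  have hconv : Convex ℝ K := by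
    rintro ⟨ξ, y⟩ ⟨u, hu, huy⟩ ⟨η, z⟩ ⟨v, hv, hvz⟩ c d hc hd hcd
    obtain ⟨h1, h2⟩ := adm_comb hu hv hc hd hcd
    refine ⟨_, h1, h2.trans ?_⟩
    simp only at huy hvz
    simp only [Prod.smul_mk, Prod.mk_add_mk, smul_eq_mul]
    gcongr
  by_cases hint : (interior K).Nonempty
  · have hnot : (ζ, V1 n T A B ζ) ∉ interior K := by
      intro hmem
      have hnh : K ∈ nhds (ζ, V1 n T A B ζ) := mem_interior_iff_mem_nhds.1 hmem
      have hcont : Filter.Tendsto (fun k : ℕ => (ζ, V1 n T A B ζ - 1 / ((k:ℝ) + 1))) Filter.atTop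
          (nhds (ζ, V1 n T A B ζ)) := by
        refine tendsto_const_nhds.prodMk_nhds ?_
        simpa using tendsto_one_div_add_atTop_nhds_zero_nat.const_sub (V1 n T A B ζ)
      obtain ⟨k, u, hu, hk⟩ := (hcont.eventually hnh).exists
      have := V1_le hu
      have : 0 < 1 / ((k:ℝ) + 1) := by positivity
      simp only at *
      linarith
    obtain ⟨f, hf, hle⟩ := geometric_hahn_banach_of_nonempty_interior_point hconv hnot hint
    refine ⟨f.toLinearMap, fun h => hf (ContinuousLinearMap.ext fun x => LinearMap.congr_fun h x), ?_⟩
    intro ξ u hu y hy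
    exact hle _ ⟨u, hu, hy⟩
  · have h0 : ∀ y : ℝ, 0 ≤ y → ((0 : Fin n → ℝ), y) ∈ K := fun y hy =>
      ⟨fun _ => 0, ⟨measurable_const, fun s _ => by simp, by simp [stateInt]⟩, by
        simpa [L1Norm] using hy⟩
    rw [hconv.interior_nonempty_iff_affineSpan_eq_top] at hint
    have hspan : Submodule.span ℝ K < ⊤ := by
      rw [lt_top_iff_ne_top]
      intro htop
      apply hint
      have := affineSpan_insert_zero (k := ℝ) K
      rw [Set.insert_eq_of_mem (show (0 : (Fin n → ℝ) × ℝ) ∈ K from h0 0 le_rfl), htop] at this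
      ext x
      simpa using Set.ext_iff.1 this x
    obtain ⟨f, hf, hker⟩ := Submodule.exists_le_ker_of_lt_top _ hspan
    have hz : ∀ z ∈ K, f z = 0 := fun z hz => hker (Submodule.subset_span hz)
    refine ⟨f, hf, ?_⟩
    intro ξ u hu y hy
    rw [hz _ ⟨u, hu, hy⟩]
    obtain ⟨v, hv, hlt⟩ := V1_approx hζ one_pos
    have h1 := hz (ζ, V1 n T A B ζ + 1) ⟨v, hv, hlt.le⟩
    have h2 := hz _ (h0 1 zero_le_one)
    have : (ζ, V1 n T A B ζ + 1) = (ζ, V1 n T A B ζ) + ((0 : Fin n → ℝ), (1:ℝ)) := by simp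
    rw [this, map_add, h2] at h1
    linarith

/-- Abnormal case: extremal controls are unique. -/
lemma abnormal (a : (Fin n → ℝ) →ₗ[ℝ] ℝ) (hq : ∀ᵐ s : ℝ, a (phi n A B s) ≠ 0)
    {ξ : Fin n → ℝ} {u : ℝ → ℝ} (hu : Admissible n T A B ξ u)
    (hmax : ∀ η v, Admissible n T A B η v → a η ≤ a ξ) :
    ξ = - stateInt n T A B (fun s => if 0 < a (phi n A B s) then -1 else 1) := by
  set v : ℝ → ℝ := fun s => if 0 < a (phi n A B s) then -1 else 1 with hv
  obtain ⟨hm, hb, he⟩ := hu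
  have hvm : Measurable v := Measurable.ite
    (measurableSet_lt measurable_const (a_cont a).measurable) measurable_const measurable_const
  have hvb : MagBdd T v := fun s _ => by simp only [hv]; split_ifs <;> simp
  have h1 := hmax (-stateInt n T A B v) v ⟨hvm, hvb, by simp⟩
  have e : ξ = -stateInt n T A B u := by rw [he]; simp
  rw [e, map_neg, map_neg, neg_le_neg_iff, a_stateInt a hm hb, a_stateInt a hvm hvb] at h1
  have hIu := integrable_smul hm hb (a_cont (n := n) (A := A) (B := B) a)
  have hIv := integrable_smul hvm hvb (a_cont (n := n) (A := A) (B := B) a)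
  simp only [smul_eq_mul] at hIu hIv
  have hnn : 0 ≤ᵐ[volume.restrict (Icc (0:ℝ) T)]
      fun s => u s * a (phi n A B s) - v s * a (phi n A B s) := by
    filter_upwards [ae_bdd hb] with s hs
    obtain ⟨l1, l2⟩ := abs_le.1 hs
    simp only [hv, Pi.zero_apply]
    split_ifs with h
    · nlinarith
    · nlinarith
  have hz : ∫ s in Icc (0:ℝ) T, (u s * a (phi n A B s) - v s * a (phi n A B s)) = 0 := by
    refine le_antisymm ?_ (integral_nonneg_of_ae hnn)
    rw [integral_sub hIu hIv]
    linarith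
  have hae := (integral_eq_zero_iff_of_nonneg_ae hnn (hIu.sub hIv)).1 hz
  rw [e]
  congr 1
  refine integral_congr_ae ?_
  filter_upwards [hae, ae_restrict_of_ae hq] with s hs h0
  have : (u s - v s) * a (phi n A B s) = 0 := by
    simp only [Pi.zero_apply] at hs
    linarith
  rcases mul_eq_zero.1 this with h | h
  · rw [sub_eq_zero.1 h]
  · exact absurd h h0

end ctrl

theorem value_function_strictly_convex (n : ℕ) (T : ℝ) (hT : 0 < T)
    (A : Matrix (Fin n) (Fin n) ℝ) (B : Fin n → ℝ)
    (hctrb : (ctrbMatrix n A B).rank = n) (hA : A.det ≠ 0) :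
    ∀ ξ ∈ Reach n T A B, ∀ η ∈ Reach n T A B, ξ ≠ η →
      ∀ l : ℝ, 0 < l → l < 1 →
        V0 n T A B ((1 - l) • ξ + l • η)
          < (1 - l) * V0 n T A B ξ + l * V0 n T A B η := by
  intro ξ hξ η hη hne l hl0 hl1
  obtain ⟨u, hu⟩ := adm_of_reach hξ
  obtain ⟨v, hv⟩ := adm_of_reach hη
  set ζ : Fin n → ℝ := (1 - l) • ξ + l • η with hζdef
  have hζ : ∃ w, Admissible n T A B ζ w :=
    ⟨_, (adm_comb hu hv (by linarith) hl0.le (by ring)).1⟩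
  obtain ⟨f, hf, hsup⟩ := support hζ
  set b : (Fin n → ℝ) →ₗ[ℝ] ℝ := f.comp (LinearMap.inl ℝ (Fin n → ℝ) ℝ) with hb
  set p : ℝ := f (0, 1) with hp
  have hfe : ∀ x y, f (x, y) = b x + p * y := by
    intro x y
    have : (x, y) = (x, (0:ℝ)) + y • ((0 : Fin n → ℝ), (1:ℝ)) := by simp
    rw [this, map_add, map_smul, smul_eq_mul, mul_comm]
    rfl
  have hp0 : p ≤ 0 := by
    obtain ⟨w, hw, hlt⟩ := V1_approx hζ one_pos
    have := hsup ζ w hw _ hlt.le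
    rw [hfe, hfe] at this
    linarith
  rcases hp0.lt_or_eq with hneg | hzero
  · -- normal case
    set a : (Fin n → ℝ) →ₗ[ℝ] ℝ := (-p)⁻¹ • b with ha
    have hpp : 0 < -p := by linarith
    have hba : ∀ x, b x = (-p) * a x := by
      intro x
      simp only [ha, LinearMap.smul_apply, smul_eq_mul]
      rw [mul_inv_cancel_left₀ hpp.ne']
    have hsupa : ∀ x w, Admissible n T A B x w → V1 n T A B ζ - a ζ ≤ L1Norm T w - a x := by
      intro x w hw
      have h1 := hsup x w hw _ le_rfl
      rw [hfe, hfe, hba, hba] at h1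
      have h2 : (-p) * (V1 n T A B ζ - a ζ) ≤ (-p) * (L1Norm T w - a x) := by linarith
      exact le_of_mul_le_mul_left h2 hpp
    have hlev : ∀ c : ℝ, c ≠ 0 → ∀ᵐ s : ℝ, a (phi n A B s) ≠ c := by
      intro c hc
      by_cases ha0 : a = 0
      · exact Filter.Eventually.of_forall fun s => by simp [ha0, hc.symm]
      · exact level_null n A B hctrb hA a ha0 c
    have hq1 := hlev 1 one_ne_zero
    have hq2 := hlev (-1) (by norm_num)
    set q : ℝ → ℝ := fun s => a (phi n A B s) with hqd
    have hq : Continuous q := a_cont a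
    have hstar : Admissible n T A B (-stateInt n T A B (ustar q)) (ustar q) :=
      ⟨ustar_measurable q hq, ustar_bdd T q, by simp⟩
    have hζstar : Admissible n T A B ζ (ustar q) := by
      refine normal_adm a hq1 hq2 hζ ?_
      have h1 := hsupa _ _ hstar
      have h2 := Jfun_adm a hstar
      linarith
    have hJζ := Jfun_adm a hζstar
    have hV0ζ : V0 n T A B ζ ≤ Jfun T q (ustar q) + a ζ := by
      have := V0_le hζstar
      rw [L0_ustar q hq] at this
      linarith
    have hlow : ∀ x, (∃ w, Admissible n T A B x w) →
        Jfun T q (ustar q) ≤ V1 n T A B x - a x := by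
      intro x hx
      obtain ⟨w0, hw0⟩ := hx
      have : Jfun T q (ustar q) + a x ≤ V1 n T A B x := by
        refine le_csInf ⟨_, w0, hw0, rfl⟩ ?_
        rintro c ⟨w, hw, rfl⟩
        have h1 := Jfun_adm a hw
        have h2 := Jfun_ge hw.1 hw.2.1 hq
        linarith
      linarith
    by_contra hcon
    rw [not_lt] at hcon
    have hξ1 := hlow ξ ⟨u, hu⟩
    have hη1 := hlow η ⟨v, hv⟩
    have hξ0 := V1_le_V0 ⟨u, hu⟩
    have hη0 := V1_le_V0 ⟨v, hv⟩
    have haζ : a ζ = (1 - l) * a ξ + l * a η := by simp [hζdef]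
    have hl1' : 0 < 1 - l := by linarith
    have hξ2 : V1 n T A B ξ - a ξ ≤ Jfun T q (ustar q) := by
      by_contra hc
      rw [not_le] at hc
      nlinarith [mul_lt_mul_of_pos_left hc hl1', mul_le_mul_of_nonneg_left hη1 hl0.le,
        mul_le_mul_of_nonneg_left hξ0 hl1'.le, mul_le_mul_of_nonneg_left hη0 hl0.le]
    have hη2 : V1 n T A B η - a η ≤ Jfun T q (ustar q) := by
      by_contra hc
      rw [not_le] at hc
      nlinarith [mul_lt_mul_of_pos_left hc hl0, mul_le_mul_of_nonneg_left hξ1 hl1'.le,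
        mul_le_mul_of_nonneg_left hξ0 hl1'.le, mul_le_mul_of_nonneg_left hη0 hl0.le]
    have e1 := (normal_adm a hq1 hq2 ⟨u, hu⟩ hξ2).2.2
    have e2 := (normal_adm a hq1 hq2 ⟨v, hv⟩ hη2).2.2
    exact hne (neg_injective (e1.symm.trans e2))
  · -- abnormal case
    exfalso
    have hb0 : b ≠ 0 := by
      intro h0
      apply hf
      refine LinearMap.ext fun z => ?_
      rw [← Prod.mk.eta (p := z), hfe, h0, hzero]
      simp
    have hle : ∀ x w, Admissible n T A B x w → b x ≤ b ζ := by
      intro x w hw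
      have := hsup x w hw _ le_rfl
      rw [hfe, hfe, hzero] at this
      linarith
    have hbζ : b ζ = (1 - l) * b ξ + l * b η := by simp [hζdef]
    have h1 := hle ξ u hu
    have h2 := hle η v hv
    have h3 : b ζ ≤ b ξ := by nlinarith
    have h4 : b ζ ≤ b η := by nlinarith
    have hq := level_null n A B hctrb hA b hb0 0
    have e1 := abnormal b hq hu (fun x w hw => (hle x w hw).trans h3)
    have e2 := abnormal b hq hv (fun x w hw => (hle x w hw).trans h4)
    exact hne (e1.trans e2.symm)
end
end

section
/- Suppose the pair (A,B) is controllable (the controllability matrix [B, AB, …, A^{n-1}B] has rank n) and A is nonsingular. Then for every initial state ξ in the reachable set R, the infimum defining V(ξ) is attained by an admissible control u* ∈ U(ξ) satisfying u*(t) ∈ {-1, 0, 1} for almost every t ∈ [0,T], and moreover ‖u*‖₀ = ‖u*‖₁ = V(ξ). -/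
open MeasureTheory Set

noncomputable section

theorem bb_weak_compact {α : Type*} [MeasurableSpace α] (μ : Measure α) [IsFiniteMeasure μ]
    {n : ℕ} (G : Fin n → Lp ℝ 2 μ) (c : Fin n → ℝ) :
    IsCompact {φ : WeakDual ℝ (Lp ℝ 2 μ) | ∃ u : Lp ℝ 2 μ, (∀ f, φ f = inner ℝ u f) ∧
      (∀ᵐ x ∂μ, 0 ≤ u x ∧ u x ≤ 1) ∧ ∀ i, inner ℝ u (G i) = c i} := by
  have hI : ∀ (s : Set α) (hs : MeasurableSet s) (u : Lp ℝ 2 μ),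
      inner ℝ u (indicatorConstLp 2 hs (measure_ne_top μ s) (1:ℝ)) = ∫ x in s, u x ∂μ := by
    intro s hs u
    rw [real_inner_comm, L2.inner_indicatorConstLp_one]
  set one : Lp ℝ 2 μ := indicatorConstLp 2 MeasurableSet.univ (measure_ne_top μ univ) (1:ℝ) with hone
  have hone1 : ∀ᵐ x ∂μ, one x = 1 := by
    filter_upwards [indicatorConstLp_coeFn_mem (p := 2) (hs := MeasurableSet.univ)
      (hμs := measure_ne_top μ univ) (c := (1:ℝ))] with x hx
    exact hx (mem_univ x)
  have hintg : ∀ u : Lp ℝ 2 μ, Integrable u μ := fun u => (Lp.memLp u).integrable (by norm_num)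
  have key : {φ : WeakDual ℝ (Lp ℝ 2 μ) | ∃ u : Lp ℝ 2 μ, (∀ f, φ f = inner ℝ u f) ∧
      (∀ᵐ x ∂μ, 0 ≤ u x ∧ u x ≤ 1) ∧ ∀ i, inner ℝ u (G i) = c i} =
      (WeakDual.toStrongDual ⁻¹' Metric.closedBall (0 : StrongDual ℝ (Lp ℝ 2 μ)) ‖one‖) ∩
      {φ | (∀ (s : Set α) (hs : MeasurableSet s),
        0 ≤ φ (indicatorConstLp 2 hs (measure_ne_top μ s) (1:ℝ)) ∧
        φ (indicatorConstLp 2 hs (measure_ne_top μ s) (1:ℝ)) ≤ μ.real s) ∧ ∀ i, φ (G i) = c i} := by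
    ext φ
    constructor
    · rintro ⟨u, hφ, hu, hc⟩
      have hφ' : WeakDual.toStrongDual φ = InnerProductSpace.toDual ℝ _ u := by
        ext f
        simpa using hφ f
      refine ⟨?_, ?_, ?_⟩
      · simp only [mem_preimage, mem_closedBall_zero_iff, hφ', LinearIsometryEquiv.norm_map]
        apply Lp.norm_le_norm_of_ae_le
        filter_upwards [hu, hone1] with x hx h1
        rw [h1, Real.norm_eq_abs, abs_of_nonneg hx.1]; simpa using hx.2
      · intro s hs
        rw [hφ, hI]
        refine ⟨integral_nonneg_of_ae ?_, ?_⟩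
        · exact ae_restrict_of_ae (hu.mono fun x hx => hx.1)
        · calc ∫ x in s, u x ∂μ ≤ ∫ x in s, (1:ℝ) ∂μ := by
                apply integral_mono_ae (hintg u).integrableOn (integrable_const _)
                exact ae_restrict_of_ae (hu.mono fun x hx => hx.2)
            _ = μ.real s := by simp
      · intro i; rw [hφ]; exact hc i
    · rintro ⟨-, h1, h2⟩
      set u := (InnerProductSpace.toDual ℝ _).symm (WeakDual.toStrongDual φ) with hu
      have hφ : ∀ f, φ f = inner ℝ u f := by
        intro f
        rw [hu, InnerProductSpace.toDual_symm_apply]; rfl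
      refine ⟨u, hφ, ?_, fun i => by rw [← hφ]; exact h2 i⟩
      have a1 : (0 : α → ℝ) ≤ᵐ[μ] u := by
        apply ae_le_of_forall_setIntegral_le (integrable_zero _ _ _) (hintg u)
        intro s hs _
        have := (h1 s hs).1
        rw [hφ, hI] at this
        simpa using this
      have a2 : u ≤ᵐ[μ] (fun _ => (1:ℝ)) := by
        apply ae_le_of_forall_setIntegral_le (hintg u) (integrable_const _)
        intro s hs _
        have := (h1 s hs).2
        rw [hφ, hI] at this
        simpa using this
      filter_upwards [a1, a2] with x h h' using ⟨h, h'⟩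
  rw [key]
  apply (WeakDual.isCompact_closedBall (0 : StrongDual ℝ (Lp ℝ 2 μ)) ‖one‖).inter_right
  simp only [setOf_and, setOf_forall]
  have hev : ∀ f : Lp ℝ 2 μ, Continuous fun φ : WeakDual ℝ (Lp ℝ 2 μ) => φ f :=
    fun f => WeakDual.eval_continuous f
  refine IsClosed.inter (isClosed_iInter fun s => isClosed_iInter fun hs => ?_)
    (isClosed_iInter fun i => isClosed_eq (hev _) continuous_const)
  exact IsClosed.inter (isClosed_le continuous_const (hev _)) (isClosed_le (hev _) continuous_const)

theorem bb_poly (T : ℝ) {n : ℕ} (μ : Measure ℝ) (hμ : μ = volume.restrict (Icc (-T) T))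
    (G : Fin n → Lp ℝ 2 μ) (E : Set ℝ) (hE : MeasurableSet E) (hE0 : μ E ≠ 0) :
    ∃ (h : Lp ℝ 2 μ) (C : ℝ), 0 < C ∧ h ≠ 0 ∧ (∀ i, inner ℝ h (G i) = 0) ∧
      (∀ᵐ x ∂μ, |h x| ≤ C) ∧ (∀ᵐ x ∂μ, x ∉ E → h x = 0) := by
  have hfin : IsFiniteMeasure μ := by rw [hμ]; infer_instance
  have hna : NullSingletonClass μ := by rw [hμ]; infer_instance
  have hbd : ∀ P : Polynomial ℝ, ∃ C : ℝ, 0 < C ∧ ∀ᵐ x ∂μ, |E.indicator (fun x => P.eval x) x| ≤ C := by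
    intro P
    obtain ⟨C, hC⟩ := (isCompact_Icc (a := -T) (b := T)).exists_bound_of_continuousOn
      (f := fun x => P.eval x) P.continuous.continuousOn
    refine ⟨max C 1, by positivity, ?_⟩
    rw [hμ]
    filter_upwards [ae_restrict_mem measurableSet_Icc] with x hx
    have := hC x hx
    rw [Real.norm_eq_abs] at this
    by_cases hxE : x ∈ E
    · rw [indicator_of_mem hxE]; exact this.trans (le_max_left _ _)
    · rw [indicator_of_notMem hxE]; simp
  have hmem : ∀ P : Polynomial ℝ, MemLp (E.indicator (fun x => P.eval x)) 2 μ := by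
    intro P
    obtain ⟨C, -, hC⟩ := hbd P
    exact MemLp.of_bound ((P.continuous.measurable.indicator hE).aestronglyMeasurable) C hC
  let M : Polynomial ℝ →ₗ[ℝ] Lp ℝ 2 μ :=
    { toFun := fun P => (hmem P).toLp _
      map_add' := by
        intro P Q
        rw [← MemLp.toLp_add]
        apply MemLp.toLp_congr
        refine Filter.Eventually.of_forall fun x => ?_
        by_cases hxE : x ∈ E <;> simp [hxE]
      map_smul' := by
        intro a P
        rw [RingHom.id_apply, ← MemLp.toLp_const_smul]
        apply MemLp.toLp_congr
        refine Filter.Eventually.of_forall fun x => ?_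
        by_cases hxE : x ∈ E <;> simp [hxE] }
  let N : Polynomial ℝ →ₗ[ℝ] (Fin n → ℝ) :=
    LinearMap.pi fun i => ((innerSL ℝ (G i)) : Lp ℝ 2 μ →ₗ[ℝ] ℝ) ∘ₗ M
  have hN : ¬ Function.Injective N := by
    intro hinj
    exact Polynomial.not_finite (R := ℝ) (Module.Finite.of_injective N hinj)
  rw [injective_iff_map_eq_zero] at hN
  push Not at hN
  obtain ⟨P, hP, hP0⟩ := hN
  obtain ⟨C, hC0, hC⟩ := hbd P
  have hMP : M P =ᵐ[μ] E.indicator (fun x => P.eval x) := (hmem P).coeFn_toLp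
  refine ⟨M P, C, hC0, ?_, ?_, ?_, ?_⟩
  · intro h0
    rw [h0] at hMP
    apply hE0
    have hr : μ {x | P.IsRoot x} = 0 := (Polynomial.finite_setOfPred_isRoot hP0).measure_zero μ
    have : ∀ᵐ x ∂μ, x ∉ E := by
      filter_upwards [hMP, Lp.coeFn_zero ℝ 2 μ, measure_eq_zero_iff_ae_notMem.1 hr] with x h1 h2 h3 hx
      apply h3
      rw [h2, indicator_of_mem hx] at h1
      exact h1.symm
    exact measure_eq_zero_iff_ae_notMem.2 this
  · intro i
    rw [real_inner_comm]
    exact congrFun hP i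
  · filter_upwards [hMP, hC] with x h1 h2
    rw [h1]; exact h2
  · filter_upwards [hMP] with x h1 hx
    rw [h1, indicator_of_notMem hx]

theorem bb_main (T : ℝ) {n : ℕ} (μ : Measure ℝ) (hμ : μ = volume.restrict (Icc (-T) T))
    (G : Fin n → ℝ → ℝ) (hG : ∀ i, MemLp (G i) 2 μ) (c : Fin n → ℝ)
    (v0 : ℝ → ℝ) (hv0 : Measurable v0) (hv01 : ∀ᵐ x ∂μ, 0 ≤ v0 x ∧ v0 x ≤ 1)
    (hv0c : ∀ i, ∫ x, v0 x * G i x ∂μ = c i) :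
    ∃ E : Set ℝ, MeasurableSet E ∧ (∀ i, ∫ x, E.indicator 1 x * G i x ∂μ = c i) ∧
      ∀ v : ℝ → ℝ, Measurable v → (∀ᵐ x ∂μ, 0 ≤ v x ∧ v x ≤ 1) →
        (∀ i, ∫ x, v x * G i x ∂μ = c i) → ∫ x, E.indicator 1 x ∂μ ≤ ∫ x, v x ∂μ := by
  have hfin : IsFiniteMeasure μ := by rw [hμ]; infer_instance
  let G' : Fin n → Lp ℝ 2 μ := fun i => (hG i).toLp _
  have hinner : ∀ (u : Lp ℝ 2 μ) (i), inner ℝ u (G' i) = ∫ x, u x * G i x ∂μ := by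
    intro u i
    rw [L2.inner_def]
    apply integral_congr_ae
    filter_upwards [(hG i).coeFn_toLp] with x hx
    simp only [G', hx]
    simp [mul_comm]
  have hone : MemLp (fun _ : ℝ => (1:ℝ)) 2 μ := memLp_const 1
  let one : Lp ℝ 2 μ := hone.toLp _
  have hinner1 : ∀ (u : Lp ℝ 2 μ), inner ℝ u one = ∫ x, u x ∂μ := by
    intro u
    rw [L2.inner_def]
    apply integral_congr_ae
    filter_upwards [hone.coeFn_toLp] with x hx
    simp only [one, hx]
    simp
  have hml : ∀ v : ℝ → ℝ, Measurable v → (∀ᵐ x ∂μ, 0 ≤ v x ∧ v x ≤ 1) → MemLp v 2 μ := by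
    intro v hv h
    refine MemLp.of_bound hv.aestronglyMeasurable 1 (h.mono fun x hx => ?_)
    rw [Real.norm_eq_abs, abs_of_nonneg hx.1]; exact hx.2
  set K := {φ : WeakDual ℝ (Lp ℝ 2 μ) | ∃ u : Lp ℝ 2 μ, (∀ f, φ f = inner ℝ u f) ∧
      (∀ᵐ x ∂μ, 0 ≤ u x ∧ u x ≤ 1) ∧ ∀ i, inner ℝ u (G' i) = c i} with hK
  have hKc : IsCompact K := bb_weak_compact μ G' c
  have hin : ∀ u : Lp ℝ 2 μ, (∀ᵐ x ∂μ, 0 ≤ u x ∧ u x ≤ 1) → (∀ i, inner ℝ u (G' i) = c i) →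
      (StrongDual.toWeakDual (InnerProductSpace.toDual ℝ _ u)) ∈ K := by
    intro u h1 h2
    exact ⟨u, fun f => by simp, h1, h2⟩
  have hv : ∀ v : ℝ → ℝ, Measurable v → (∀ᵐ x ∂μ, 0 ≤ v x ∧ v x ≤ 1) →
        (∀ i, ∫ x, v x * G i x ∂μ = c i) → ∃ φ ∈ K, φ one = ∫ x, v x ∂μ := by
    intro v h1 h2 h3
    have hae := (hml v h1 h2).coeFn_toLp
    refine ⟨_, hin ((hml v h1 h2).toLp v) ?_ ?_, ?_⟩
    · filter_upwards [hae, h2] with x h h'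
      rw [h]; exact h'
    · intro i
      rw [hinner, ← h3]
      apply integral_congr_ae
      filter_upwards [hae] with x h
      rw [h]
    · have : (StrongDual.toWeakDual (InnerProductSpace.toDual ℝ _ ((hml v h1 h2).toLp v))) one
        = inner ℝ ((hml v h1 h2).toLp v) one := by simp
      rw [this, hinner1]
      exact integral_congr_ae hae
  obtain ⟨φ0, hφ0, -⟩ := hv v0 hv0 hv01 hv0c
  have hev : ∀ f : Lp ℝ 2 μ, Continuous fun φ : WeakDual ℝ (Lp ℝ 2 μ) => φ f :=
    fun f => WeakDual.eval_continuous f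
  obtain ⟨φm, hφm, hmin⟩ := hKc.exists_isMinOn ⟨φ0, hφ0⟩ (hev one).continuousOn
  have hKc' : IsCompact (K ∩ {φ | φ one = φm one}) :=
    hKc.inter_right (isClosed_eq (hev one) continuous_const)
  have hlc : LocallyConvexSpace ℝ (WeakDual ℝ (Lp ℝ 2 μ)) :=
    WeakBilin.locallyConvexSpace (B := topDualPairing ℝ (Lp ℝ 2 μ))
  obtain ⟨φ, hφ⟩ := hKc'.extremePoints_nonempty ⟨φm, hφm, rfl⟩
  obtain ⟨⟨⟨u, hφu, hu01, huc⟩, hφ1⟩, hext⟩ := hφ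
  simp only [mem_setOf_eq] at hφ1
  have hum : Measurable u := (Lp.stronglyMeasurable u).measurable
  -- the extreme point is bang-bang
  have hno : ∀ ε > 0, μ {x | ε ≤ u x ∧ u x ≤ 1 - ε} = 0 := by
    intro ε hε
    by_contra hne
    have hEm : MeasurableSet {x | ε ≤ u x ∧ u x ≤ 1 - ε} :=
      (measurableSet_le measurable_const hum).inter (measurableSet_le hum measurable_const)
    obtain ⟨h, C, hC, hh0, hhG, hhC, hhE⟩ := bb_poly T μ hμ (Fin.cons one G') _ hEm hne
    have hh1 : inner ℝ h one = 0 := hhG 0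
    have hhG' : ∀ i, inner ℝ h (G' i) = 0 := fun i => hhG i.succ
    have hpert : ∀ a : ℝ, |a| ≤ ε / C →
        StrongDual.toWeakDual (InnerProductSpace.toDual ℝ _ (u + a • h)) ∈
          K ∩ {φ | φ one = φm one} := by
      intro a ha
      refine ⟨hin _ ?_ ?_, ?_⟩
      · filter_upwards [hu01, hhC, hhE, Lp.coeFn_add u (a • h), Lp.coeFn_smul a h] with x h1 h2 h3 h4 h5
        rw [h4, Pi.add_apply, h5, Pi.smul_apply, smul_eq_mul]
        by_cases hx : ε ≤ u x ∧ u x ≤ 1 - ε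
        · have : |a * h x| ≤ ε := by
            rw [abs_mul]
            calc |a| * |h x| ≤ (ε / C) * C := by gcongr
              _ = ε := by field_simp
          rw [abs_le] at this
          constructor <;> linarith [hx.1, hx.2, this.1, this.2]
        · rw [h3 hx]; simpa using h1
      · intro i
        rw [inner_add_left, inner_smul_left, hhG', huc]; simp
      · have : (StrongDual.toWeakDual (InnerProductSpace.toDual ℝ _ (u + a • h))) one
          = inner ℝ (u + a • h) one := rfl
        rw [mem_setOf_eq, this, inner_add_left, inner_smul_left, hh1, ← hφ1, hφu]; simp
    have hp := hpert (ε / C) (by rw [abs_of_pos (by positivity)])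
    have hq := hpert (-(ε / C)) (by rw [abs_neg, abs_of_pos (by positivity)])
    have hseg : φ ∈ openSegment ℝ
        (StrongDual.toWeakDual (InnerProductSpace.toDual ℝ _ (u + (ε / C) • h)))
        (StrongDual.toWeakDual (InnerProductSpace.toDual ℝ _ (u + (-(ε / C)) • h))) := by
      refine ⟨1/2, 1/2, by norm_num, by norm_num, by norm_num, ?_⟩
      apply DFunLike.ext
      intro f
      have e1 : ((1/2:ℝ) • (StrongDual.toWeakDual (InnerProductSpace.toDual ℝ _ (u + (ε / C) • h)))
        + (1/2:ℝ) • (StrongDual.toWeakDual (InnerProductSpace.toDual ℝ _ (u + (-(ε / C)) • h)))) f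
        = 1/2 * inner ℝ (u + (ε / C) • h) f + 1/2 * inner ℝ (u + (-(ε / C)) • h) f := rfl
      rw [e1, hφu, inner_add_left, inner_add_left, inner_smul_left, inner_smul_left]
      simp; ring
    have heq := hext hp hq hseg
    have h2 : inner ℝ (u + (ε / C) • h) h = inner ℝ u h := by
      rw [← hφu h, ← heq]; rfl
    rw [inner_add_left, inner_smul_left] at h2
    have h3 : (ε / C) * inner ℝ h h = 0 := by simpa using h2
    have h4 : 0 < ε / C := by positivity
    have h5 : inner ℝ h h = 0 := by
      rcases mul_eq_zero.1 h3 with h | h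
      · exact absurd h h4.ne'
      · exact h
    exact hh0 (inner_self_eq_zero.1 h5)
  have hbang : ∀ᵐ x ∂μ, u x = 0 ∨ u x = 1 := by
    have hall : ∀ᵐ x ∂μ, ∀ k : ℕ, ¬ (1 / ((k:ℝ) + 1) ≤ u x ∧ u x ≤ 1 - 1 / ((k:ℝ) + 1)) := by
      rw [ae_all_iff]
      intro k
      exact measure_eq_zero_iff_ae_notMem.1 (hno (1 / ((k:ℝ) + 1)) (by positivity))
    filter_upwards [hall, hu01] with x h1 h2
    by_contra hcon
    push Not at hcon
    have a1 : 0 < u x := lt_of_le_of_ne h2.1 (Ne.symm hcon.1)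
    have a2 : u x < 1 := lt_of_le_of_ne h2.2 hcon.2
    obtain ⟨k, hk⟩ := exists_nat_one_div_lt (lt_min a1 (sub_pos.2 a2))
    apply h1 k
    have := lt_min_iff.1 hk
    constructor <;> linarith [this.1, this.2]
  have huE : ∀ᵐ x ∂μ, ({x | u x = 1} : Set ℝ).indicator 1 x = u x := by
    filter_upwards [hbang] with x hx
    rcases hx with hx | hx <;> simp [hx]
  refine ⟨{x | u x = 1}, hum (measurableSet_singleton 1), ?_, ?_⟩
  · intro i
    rw [← huc i, hinner]
    apply integral_congr_ae
    filter_upwards [huE] with x hx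
    rw [hx]
  · intro v h1 h2 h3
    obtain ⟨ψ, hψ, hψ1⟩ := hv v h1 h2 h3
    rw [← hψ1]
    have : ∫ x, ({x | u x = 1} : Set ℝ).indicator 1 x ∂μ = φm one := by
      rw [← hφ1, hφu, hinner1]
      exact integral_congr_ae huE
    rw [this]
    exact hmin hψ

theorem bb_fold (T : ℝ) (hT : 0 < T) (F : ℝ → ℝ) (hF : IntegrableOn F (Icc (-T) T)) :
    ∫ x in Icc (-T) T, F x = ∫ t in Ioc 0 T, (F t + F (-t)) := by
  have h1 : IntervalIntegrable F volume (-T) 0 :=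
    (hF.mono_set (by rw [uIcc_of_le (by linarith)]; exact Icc_subset_Icc_right hT.le)).intervalIntegrable
  have h2 : IntervalIntegrable F volume 0 T :=
    (hF.mono_set (by rw [uIcc_of_le (by linarith)]; exact Icc_subset_Icc_left (by linarith))).intervalIntegrable
  have h3 : IntervalIntegrable (fun t => F (-t)) volume 0 T := by
    have := h1.comp_sub_left 0
    simpa using this.symm
  rw [integral_Icc_eq_integral_Ioc, ← intervalIntegral.integral_of_le (by linarith),
    ← intervalIntegral.integral_of_le hT.le, intervalIntegral.integral_add h2 h3,
    ← intervalIntegral.integral_add_adjacent_intervals h1 h2,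
    intervalIntegral.integral_comp_neg (fun t => F t)]
  simp [add_comm]

def bbSgn (s : ℝ) : ℝ := if 0 < s then 1 else -1

theorem bbSgn_meas : Measurable bbSgn :=
  Measurable.ite measurableSet_Ioi measurable_const measurable_const

theorem bb_scalar (T : ℝ) (hT : 0 < T) {n : ℕ} (g : Fin n → ℝ → ℝ) (hg : ∀ i, Continuous (g i))
    (c : Fin n → ℝ) (u0 : ℝ → ℝ) (hu0 : Measurable u0) (hu0b : ∀ t ∈ Icc (0:ℝ) T, |u0 t| ≤ 1)
    (hu0c : ∀ i, ∫ t in Icc 0 T, u0 t * g i t = c i) :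
    ∃ u : ℝ → ℝ, Measurable u ∧ (∀ t, u t = -1 ∨ u t = 0 ∨ u t = 1) ∧
      (∀ i, ∫ t in Icc 0 T, u t * g i t = c i) ∧
      ∀ w : ℝ → ℝ, Measurable w → (∀ t ∈ Icc (0:ℝ) T, |w t| ≤ 1) →
        (∀ i, ∫ t in Icc 0 T, w t * g i t = c i) →
        ∫ t in Icc 0 T, |u t| ≤ ∫ t in Icc 0 T, |w t| := by
  set μ : Measure ℝ := volume.restrict (Icc (-T) T) with hμ
  let G : Fin n → ℝ → ℝ := fun i s => bbSgn s * g i |s|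
  have hGm : ∀ i, Measurable (G i) := fun i =>
    bbSgn_meas.mul ((hg i).measurable.comp measurable_norm)
  have hGb : ∀ i, ∃ C, ∀ᵐ x ∂μ, ‖G i x‖ ≤ C := by
    intro i
    obtain ⟨C, hC⟩ := (isCompact_Icc (a := -T) (b := T)).exists_bound_of_continuousOn
      (f := fun x => g i |x|) ((hg i).comp continuous_abs).continuousOn
    refine ⟨C, ?_⟩
    filter_upwards [ae_restrict_mem measurableSet_Icc] with x hx
    have h1 : ‖bbSgn x‖ = 1 := by unfold bbSgn; split_ifs <;> simp
    simp only [G, norm_mul, h1, one_mul]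
    exact hC x hx
  have hG : ∀ i, MemLp (G i) 2 μ := by
    intro i
    obtain ⟨C, hC⟩ := hGb i
    exact MemLp.of_bound (hGm i).aestronglyMeasurable C hC
  have hvi : ∀ v : ℝ → ℝ, Measurable v → (∀ᵐ x ∂μ, 0 ≤ v x ∧ v x ≤ 1) → Integrable v μ := by
    intro v hv hb
    refine Integrable.of_bound hv.aestronglyMeasurable 1 (hb.mono fun x hx => ?_)
    rw [Real.norm_eq_abs, abs_of_nonneg hx.1]; exact hx.2
  have hvGi : ∀ v : ℝ → ℝ, Measurable v → (∀ᵐ x ∂μ, 0 ≤ v x ∧ v x ≤ 1) → ∀ i,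
      Integrable (fun x => v x * G i x) μ := by
    intro v hv hb i
    obtain ⟨C, hC⟩ := hGb i
    refine Integrable.of_bound (hv.mul (hGm i)).aestronglyMeasurable C ?_
    filter_upwards [hb, hC] with x h1 h2
    rw [norm_mul, Real.norm_eq_abs, abs_of_nonneg h1.1]
    calc v x * ‖G i x‖ ≤ 1 * ‖G i x‖ := by gcongr; exact h1.2
      _ ≤ C := by rw [one_mul]; exact h2
  have hfold : ∀ v : ℝ → ℝ, Measurable v → (∀ᵐ x ∂μ, 0 ≤ v x ∧ v x ≤ 1) → ∀ i,
      ∫ x, v x * G i x ∂μ = ∫ t in Icc 0 T, (v t - v (-t)) * g i t := by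
    intro v hv hb i
    rw [hμ, bb_fold T hT _ (hvGi v hv hb i), integral_Icc_eq_integral_Ioc]
    refine setIntegral_congr_fun measurableSet_Ioc fun t ht => ?_
    have h0 : 0 < t := ht.1
    have h1 : ¬ (0 < -t) := by linarith
    simp only [G, bbSgn, h0, h1, if_true, if_false, abs_neg, abs_of_pos h0]
    ring
  have hfold1 : ∀ v : ℝ → ℝ, Measurable v → (∀ᵐ x ∂μ, 0 ≤ v x ∧ v x ≤ 1) →
      ∫ x, v x ∂μ = ∫ t in Icc 0 T, (v t + v (-t)) := by
    intro v hv hb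
    rw [hμ, bb_fold T hT _ (hvi v hv hb), integral_Icc_eq_integral_Ioc]
  -- lift of a control
  have hlift : ∀ w : ℝ → ℝ, Measurable w → (∀ t ∈ Icc (0:ℝ) T, |w t| ≤ 1) →
      (∀ i, ∫ t in Icc 0 T, w t * g i t = c i) →
      ∃ v : ℝ → ℝ, Measurable v ∧ (∀ᵐ x ∂μ, 0 ≤ v x ∧ v x ≤ 1) ∧
        (∀ i, ∫ x, v x * G i x ∂μ = c i) ∧ ∫ x, v x ∂μ = ∫ t in Icc 0 T, |w t| := by
    intro w hw hwb hwc
    have hvm : Measurable fun s => max (bbSgn s * w |s|) 0 :=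
      (bbSgn_meas.mul (hw.comp measurable_norm)).max measurable_const
    have hvb : ∀ᵐ x ∂μ, 0 ≤ max (bbSgn x * w |x|) 0 ∧ max (bbSgn x * w |x|) 0 ≤ 1 := by
      filter_upwards [ae_restrict_mem measurableSet_Icc] with x hx
      refine ⟨le_max_right _ _, max_le ?_ zero_le_one⟩
      have h1 : |bbSgn x| = 1 := by unfold bbSgn; split_ifs <;> simp
      calc bbSgn x * w |x| ≤ |bbSgn x * w (|x|)| := le_abs_self _
        _ = |w (|x|)| := by rw [abs_mul, h1, one_mul]
        _ ≤ 1 := hwb _ ⟨abs_nonneg x, abs_le.2 hx⟩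
    refine ⟨_, hvm, hvb, ?_, ?_⟩
    · intro i
      rw [hfold _ hvm hvb, ← hwc i, integral_Icc_eq_integral_Ioc, integral_Icc_eq_integral_Ioc]
      refine setIntegral_congr_fun measurableSet_Ioc fun t ht => ?_
      have h0 : 0 < t := ht.1
      have h1 : ¬ (0 < -t) := by linarith
      simp only [bbSgn, h0, h1, if_true, if_false, abs_neg, abs_of_pos h0]
      congr 1
      rcases le_total 0 (w t) with h | h
      · rw [max_eq_left (by linarith), max_eq_right (by linarith)]; ring
      · rw [max_eq_right (by linarith), max_eq_left (by linarith)]; ring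
    · rw [hfold1 _ hvm hvb, integral_Icc_eq_integral_Ioc, integral_Icc_eq_integral_Ioc]
      refine setIntegral_congr_fun measurableSet_Ioc fun t ht => ?_
      have h0 : 0 < t := ht.1
      have h1 : ¬ (0 < -t) := by linarith
      simp only [bbSgn, h0, h1, if_true, if_false, abs_neg, abs_of_pos h0]
      rcases le_total 0 (w t) with h | h
      · rw [max_eq_left (by linarith), max_eq_right (by linarith), abs_of_nonneg h]; ring
      · rw [max_eq_right (by linarith), max_eq_left (by linarith), abs_of_nonpos h]; ring
  obtain ⟨v0, hv0, hv0b, hv0c, -⟩ := hlift u0 hu0 hu0b hu0c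
  obtain ⟨E, hE, hEc, hEmin⟩ := bb_main T μ hμ G hG c v0 hv0 hv0b hv0c
  set p : ℝ → ℝ := E.indicator 1 with hp
  have hpm : Measurable p := measurable_one.indicator hE
  have hp01 : ∀ x, p x = 0 ∨ p x = 1 := by
    intro x
    by_cases hx : x ∈ E <;> simp [hp, hx]
  have hpb : ∀ᵐ x ∂μ, 0 ≤ p x ∧ p x ≤ 1 := by
    refine Filter.Eventually.of_forall fun x => ?_
    rcases hp01 x with h | h <;> simp [h]
  have hum : Measurable fun t => p t - p (-t) := hpm.sub (hpm.comp measurable_neg)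
  refine ⟨fun t => p t - p (-t), hum, ?_, ?_, ?_⟩
  · intro t
    rcases hp01 t with h | h <;> rcases hp01 (-t) with h' | h' <;> simp [h, h']
  · intro i
    rw [← hEc i, hfold _ hpm hpb]
  · intro w hw hwb hwc
    obtain ⟨v, hv, hvb, hvc, hv1⟩ := hlift w hw hwb hwc
    rw [← hv1]
    refine le_trans ?_ (hEmin v hv hvb hvc)
    rw [hfold1 _ hpm hpb]
    apply integral_mono
    · refine Integrable.of_bound hum.abs.aestronglyMeasurable 1 (Filter.Eventually.of_forall fun t => ?_)
      rcases hp01 t with h | h <;> rcases hp01 (-t) with h' | h' <;> simp [h, h']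
    · refine Integrable.of_bound (hpm.add (hpm.comp measurable_neg)).aestronglyMeasurable 2
        (Filter.Eventually.of_forall fun t => ?_)
      rcases hp01 t with h | h <;> rcases hp01 (-t) with h' | h' <;> simp [h, h'] <;> norm_num
    · intro t
      rcases hp01 t with h | h <;> rcases hp01 (-t) with h' | h' <;> simp [h, h']

section
attribute [local instance] Matrix.linftyOpNormedRing Matrix.linftyOpNormedAlgebra

theorem bb_exp_cont (n : ℕ) (A : Matrix (Fin n) (Fin n) ℝ) (B : Fin n → ℝ) :
    Continuous fun s : ℝ => (NormedSpace.exp ((-s) • A)).mulVec B := by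
  have h : Continuous fun s : ℝ => NormedSpace.exp ((-s) • A) := by
    letI : NormedAlgebra ℚ (Matrix (Fin n) (Fin n) ℝ) := NormedAlgebra.restrictScalars ℚ ℝ _
    exact NormedSpace.exp_continuous.comp (by fun_prop)
  exact h.matrix_mulVec continuous_const
end

theorem bb_stateInt (n : ℕ) (T : ℝ) (A : Matrix (Fin n) (Fin n) ℝ) (B : Fin n → ℝ)
    (u : ℝ → ℝ) (hu : Measurable u) (hb : MagBdd T u) (c : Fin n → ℝ) :
    stateInt n T A B u = c ↔
      ∀ i, ∫ t in Icc 0 T, u t * (NormedSpace.exp ((-t) • A)).mulVec B i = c i := by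
  have hc := bb_exp_cont n A B
  have hi : IntegrableOn (fun s => u s • (NormedSpace.exp ((-s) • A)).mulVec B) (Icc 0 T) := by
    obtain ⟨C, hC⟩ := (isCompact_Icc (a := (0:ℝ)) (b := T)).exists_bound_of_continuousOn
      hc.continuousOn
    refine Integrable.of_bound
      (hu.aestronglyMeasurable.smul hc.aestronglyMeasurable) C ?_
    filter_upwards [ae_restrict_mem measurableSet_Icc] with x hx
    rw [norm_smul]
    calc ‖u x‖ * _ ≤ 1 * _ := mul_le_mul_of_nonneg_right (hb x hx) (norm_nonneg _)
      _ ≤ C := by rw [one_mul]; exact hC x hx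
  rw [funext_iff]
  refine forall_congr' fun i => ?_
  have := (ContinuousLinearMap.proj (R := ℝ) (φ := fun _ : Fin n => ℝ) i).integral_comp_comm hi
  have h2 : stateInt n T A B u i = ∫ t in Icc 0 T, u t * (NormedSpace.exp ((-t) • A)).mulVec B i := 
    this.symm
  rw [h2]

theorem bb_L0 (T : ℝ) (u : ℝ → ℝ) (hu : Measurable u) :
    L0Norm T u = ∫ t in Icc (0:ℝ) T, ({t | u t ≠ 0} : Set ℝ).indicator 1 t := by
  have hm : MeasurableSet {t | u t ≠ 0} := (hu (measurableSet_singleton 0)).compl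
  rw [integral_indicator_one hm, L0Norm, Measure.real, Measure.restrict_apply hm, inter_comm]
  rfl

theorem bb_L1_le_L0 (T : ℝ) (u : ℝ → ℝ) (hu : Measurable u) (hb : MagBdd T u) :
    L1Norm T u ≤ L0Norm T u := by
  have hm : MeasurableSet {t | u t ≠ 0} := (hu (measurableSet_singleton 0)).compl
  rw [bb_L0 T u hu]
  apply setIntegral_mono_on _ _ measurableSet_Icc
  · intro t ht
    by_cases h : u t = 0
    · simp [h]
    · simpa [h] using hb t ht
  · refine Integrable.of_bound hu.abs.aestronglyMeasurable 1 ?_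
    filter_upwards [ae_restrict_mem measurableSet_Icc] with x hx
    simpa using hb x hx
  · exact (integrable_const (1:ℝ)).indicator hm

theorem maximum_handsoff_optimal_control_exists (n : ℕ) (T : ℝ) (hT : 0 < T)
    (A : Matrix (Fin n) (Fin n) ℝ) (B : Fin n → ℝ)
    (hctrb : (ctrbMatrix n A B).rank = n) (hA : A.det ≠ 0) :
    ∀ ξ ∈ Reach n T A B,
      ∃ u, Admissible n T A B ξ u ∧
        (∀ᵐ t ∂(volume.restrict (Icc (0:ℝ) T)), u t ∈ ({-1, 0, 1} : Set ℝ)) ∧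
        L0Norm T u = V0 n T A B ξ ∧ L1Norm T u = V0 n T A B ξ := by
  rintro ξ ⟨u0, hu0, hu0b, hξ⟩
  have hc0 : ∀ i, ∫ t in Icc 0 T, (-u0 t) * (NormedSpace.exp ((-t) • A)).mulVec B i = (-ξ) i := by
    intro i
    have := (bb_stateInt n T A B u0 hu0 hu0b ξ).1 hξ.symm i
    simp only [neg_mul, integral_neg, this, Pi.neg_apply]
  obtain ⟨u, hum, hu3, huc, humin⟩ := bb_scalar T hT
    (fun i t => (NormedSpace.exp ((-t) • A)).mulVec B i)
    (fun i => (continuous_apply i).comp (bb_exp_cont n A B)) (-ξ) (fun t => -u0 t) hu0.neg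
    (fun t ht => by rw [abs_neg]; exact hu0b t ht) hc0
  have hub : MagBdd T u := by
    intro t _
    rcases hu3 t with h | h | h <;> simp [h]
  have hadm : Admissible n T A B ξ u := ⟨hum, hub, (bb_stateInt n T A B u hum hub _).2 huc⟩
  have h01 : L0Norm T u = L1Norm T u := by
    rw [bb_L0 T u hum, L1Norm]
    congr 1
    ext t
    rcases hu3 t with h | h | h <;> simp [h]
  have hV : V0 n T A B ξ = L0Norm T u := by
    refine IsLeast.csInf_eq ⟨⟨u, hadm, rfl⟩, ?_⟩
    rintro _ ⟨w, ⟨hw, hwb, hwc⟩, rfl⟩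
    rw [h01]
    exact (humin w hw hwb ((bb_stateInt n T A B w hw hwb _).1 hwc)).trans (bb_L1_le_L0 T w hw hwb)
  refine ⟨u, hadm, ?_, hV.symm, by rw [hV, h01]⟩
  refine Filter.Eventually.of_forall fun t => ?_
  simpa using hu3 t
end
end
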